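/- (Finitary Surface Standardization, CbV) In Λ⊕^cbv, if 𝔪 ⇒* 𝔫 then there exists 𝔯 such that 𝔪 ⇒ₛ* 𝔯 and 𝔯 ⇒_d* 𝔫, where ⇒ₛ is the lifting of surface reduction and ⇒_d that of deep reduction. -/

import Mathlib

open scoped NNReal ENNReal

/-- A (raw) multidistribution on `X`: a finite multiset of weighted elements. -/
abbrev MDist (X : Type) := Multiset (ℝ≥0 × X)

namespace MDist

/-- Scalar multiplication of a multidistribution. -/
def scale {X : Type} (p : ℝ≥0) (m : MDist X) : MDist X :=
  m.map fun q => (p * q.1, q.2)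

/-- The singleton multidistribution `[1 M]`. -/
def single {X : Type} (M : X) : MDist X := {(1, M)}

/-- A multidistribution is proper when every weight lies in `(0,1]` and the
weights sum to at most `1`. -/
def Proper {X : Type} (m : MDist X) : Prop :=
  (∀ q ∈ m, 0 < q.1 ∧ q.1 ≤ 1) ∧ (m.map Prod.fst).sum ≤ 1

/-- The probability that the distribution associated to a multidistribution
assigns to an event `A`. -/
noncomputable def mass {X : Type} (m : MDist X) (A : Set X) : ℝ≥0∞ :=
  (m.map fun q => A.indicator (fun _ => (q.1 : ℝ≥0∞)) q.2).sum

end MDist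

/-- One component of the lifting: either keep the term or perform a step. -/
def LiftTerm {X : Type} (r : X → MDist X → Prop) (M : X) (m : MDist X) : Prop :=
  m = MDist.single M ∨ r M m

/-- The lifting of a relation `r ⊆ X × MDist X` to a binary relation on
multidistributions. -/
inductive Lift {X : Type} (r : X → MDist X → Prop) : MDist X → MDist X → Prop
  | nil : Lift r 0 0
  | cons {p : ℝ≥0} {M : X} {m s t : MDist X} :
      LiftTerm r M m → Lift r s t → Lift r ((p, M) ::ₘ s) (MDist.scale p m + t)
/-- Terms of `Λ⊕` (de Bruijn representation). -/
inductive Term : Type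
  | var : ℕ → Term
  | lam : Term → Term
  | app : Term → Term → Term
  | choice : Term → Term → Term
deriving DecidableEq

namespace Term

/-- Shifting of de Bruijn indices above a cutoff. -/
def liftAux (c : ℕ) : Term → Term
  | var k => if k < c then var k else var (k + 1)
  | lam M => lam (liftAux (c + 1) M)
  | app M N => app (liftAux c M) (liftAux c N)
  | choice M N => choice (liftAux c M) (liftAux c N)

/-- Capture-avoiding substitution `M[N/j]`. -/
def subst : Term → ℕ → Term → Term
  | var k, j, N => if k = j then N else if j < k then var (k - 1) else var k
  | lam M, j, N => lam (subst M (j + 1) (liftAux 0 N))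
  | app M P, j, N => app (subst M j N) (subst P j N)
  | choice M P, j, N => choice (subst M j N) (subst P j N)

/-- Values: variables and abstractions. -/
inductive IsValue : Term → Prop
  | var (n : ℕ) : IsValue (var n)
  | lam (M : Term) : IsValue (lam M)

/-- `β_v`-reduction, closed under arbitrary contexts. -/
inductive BetaStep : Term → Term → Prop
  | beta {M V : Term} : IsValue V → BetaStep (app (lam M) V) (subst M 0 V)
  | appL {M M' N : Term} : BetaStep M M' → BetaStep (app M N) (app M' N)
  | appR {M N N' : Term} : BetaStep N N' → BetaStep (app M N) (app M N')
  | lam {M M' : Term} : BetaStep M M' → BetaStep (lam M) (lam M')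
  | chL {M M' N : Term} : BetaStep M M' → BetaStep (choice M N) (choice M' N)
  | chR {M N N' : Term} : BetaStep N N' → BetaStep (choice M N) (choice M N')

/-- Surface `β_v`-reduction: closure under surface contexts `S ::= □ | MS | SM`. -/
inductive SurfBetaStep : Term → Term → Prop
  | beta {M V : Term} : IsValue V → SurfBetaStep (app (lam M) V) (subst M 0 V)
  | appL {M M' N : Term} : SurfBetaStep M M' → SurfBetaStep (app M N) (app M' N)
  | appR {M N N' : Term} : SurfBetaStep N N' → SurfBetaStep (app M N) (app M N')

/-- `PlusStep M A B` holds when `M = S(P ⊕ Q)`, `A = S(P)`, `B = S(Q)` for a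
surface context `S ::= □ | MS | SM`. -/
inductive PlusStep : Term → Term → Term → Prop
  | choice {M N : Term} : PlusStep (choice M N) M N
  | appL {M A B N : Term} : PlusStep M A B → PlusStep (app M N) (app A N) (app B N)
  | appR {M N A B : Term} : PlusStep N A B → PlusStep (app M N) (app M A) (app M B)

end Term

open Term

/-- The reduction `→_{β_v} ⊆ Λ⊕ × MDST(Λ⊕)`. -/
def betaRed (M : Term) (m : MDist Term) : Prop :=
  ∃ N, BetaStep M N ∧ m = MDist.single N

/-- The probabilistic reduction `→_⊕ ⊆ Λ⊕ × MDST(Λ⊕)`. -/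
def plusRed (M : Term) (m : MDist Term) : Prop :=
  ∃ A B, PlusStep M A B ∧ m = {((1 : ℝ≥0) / 2, A), ((1 : ℝ≥0) / 2, B)}

/-- The full reduction `→ = →_{β_v} ∪ →_⊕`. -/
def red (M : Term) (m : MDist Term) : Prop := betaRed M m ∨ plusRed M m

/-- Surface reduction `→ₛ`: β_v and ⊕ rules closed under surface contexts. -/
def surfRed (M : Term) (m : MDist Term) : Prop :=
  (∃ N, SurfBetaStep M N ∧ m = MDist.single N) ∨ plusRed M m

/-- A step is deep when it is not a surface step. -/
def deepRed (M : Term) (m : MDist Term) : Prop := red M m ∧ ¬ surfRed M m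

namespace Term

theorem lift_lift (M : Term) : ∀ i c, i ≤ c →
    liftAux (c + 1) (liftAux i M) = liftAux i (liftAux c M) := by
  induction M with
  | var k =>
    intro i c h
    simp only [liftAux]
    split_ifs <;> simp only [liftAux] <;> split_ifs <;> first | rfl | omega
  | lam M ih => intro i c h; simp only [liftAux]; rw [ih (i + 1) (c + 1) (by omega)]
  | app M N ih1 ih2 => intro i c h; simp only [liftAux]; rw [ih1 i c h, ih2 i c h]
  | choice M N ih1 ih2 => intro i c h; simp only [liftAux]; rw [ih1 i c h, ih2 i c h]

theorem lift_subst_ge (M : Term) : ∀ j c N, j ≤ c →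
    liftAux c (subst M j N) = subst (liftAux (c + 1) M) j (liftAux c N) := by
  induction M with
  | var k =>
    intro j c N h
    simp only [liftAux, subst]
    split_ifs <;> simp only [liftAux, subst] <;> split_ifs <;>
      first | rfl | omega | (congr 1; omega)
  | lam M ih =>
    intro j c N h
    simp only [liftAux, subst]
    rw [ih (j + 1) (c + 1) _ (by omega), lift_lift N 0 c (by omega)]
  | app M P ih1 ih2 => intro j c N h; simp only [liftAux, subst]; rw [ih1 j c N h, ih2 j c N h]
  | choice M P ih1 ih2 =>
    intro j c N h; simp only [liftAux, subst]; rw [ih1 j c N h, ih2 j c N h]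

theorem lift_subst_le (M : Term) : ∀ i j V, i ≤ j →
    liftAux i (subst M j V) = subst (liftAux i M) (j + 1) (liftAux i V) := by
  induction M with
  | var k =>
    intro i j V h
    simp only [liftAux, subst]
    split_ifs <;> simp only [liftAux, subst] <;> split_ifs <;>
      first | rfl | omega | (congr 1; omega)
  | lam M ih =>
    intro i j V h
    simp only [liftAux, subst]
    rw [ih (i + 1) (j + 1) _ (by omega), lift_lift V 0 i (by omega)]
  | app M P ih1 ih2 => intro i j V h; simp only [liftAux, subst]; rw [ih1 i j V h, ih2 i j V h]
  | choice M P ih1 ih2 =>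
    intro i j V h; simp only [liftAux, subst]; rw [ih1 i j V h, ih2 i j V h]

theorem subst_lift (M : Term) : ∀ i N, subst (liftAux i M) i N = M := by
  induction M with
  | var k =>
    intro i N
    simp only [liftAux]
    split_ifs <;> simp only [subst] <;> split_ifs <;> first | rfl | omega
  | lam M ih => intro i N; simp only [liftAux, subst]; rw [ih]
  | app M P ih1 ih2 => intro i N; simp only [liftAux, subst]; rw [ih1, ih2]
  | choice M P ih1 ih2 => intro i N; simp only [liftAux, subst]; rw [ih1, ih2]

theorem subst_subst (M : Term) : ∀ i j N V, i ≤ j →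
    subst (subst M i N) j V = subst (subst M (j + 1) (liftAux i V)) i (subst N j V) := by
  induction M with
  | var k =>
    intro i j N V h
    rcases lt_trichotomy k i with h1 | h1 | h1
    · simp only [subst]
      rw [if_neg (by omega), if_neg (by omega), if_neg (by omega), if_neg (by omega)]
      simp only [subst]
      rw [if_neg (by omega), if_neg (by omega), if_neg (by omega), if_neg (by omega)]
    · subst h1
      simp only [subst]
      rw [if_pos trivial, if_neg (by omega), if_neg (by omega)]
      simp [subst]
    · rcases lt_trichotomy k (j + 1) with h2 | h2 | h2
      · simp only [subst]
        rw [if_neg (by omega), if_pos (by omega), if_neg (by omega), if_neg (by omega)]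
        simp only [subst]
        rw [if_neg (by omega), if_neg (by omega), if_neg (by omega), if_pos (by omega)]
      · simp only [subst]
        rw [if_neg (by omega), if_pos (by omega), if_pos (by omega), subst_lift]
        simp only [subst]
        rw [if_pos (by omega)]
      · simp only [subst]
        rw [if_neg (by omega), if_pos (by omega), if_neg (by omega), if_pos (by omega)]
        simp only [subst]
        rw [if_neg (by omega), if_pos (by omega), if_neg (by omega), if_pos (by omega)]
  | lam M ih =>
    intro i j N V h
    simp only [subst]
    rw [ih (i + 1) (j + 1) _ _ (by omega), lift_lift V 0 i (by omega),
      lift_subst_le N 0 j V (by omega)]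
  | app M P ih1 ih2 =>
    intro i j N V h; simp only [subst]; rw [ih1 i j N V h, ih2 i j N V h]
  | choice M P ih1 ih2 =>
    intro i j N V h; simp only [subst]; rw [ih1 i j N V h, ih2 i j N V h]

theorem IsValue.lift {V : Term} (h : IsValue V) (c : ℕ) : IsValue (liftAux c V) := by
  cases h with
  | var n => simp only [liftAux]; split_ifs <;> constructor
  | lam M => exact IsValue.lam _

theorem IsValue.subst {V W : Term} (h : IsValue V) (hW : IsValue W) (j : ℕ) :
    IsValue (subst V j W) := by
  cases h with
  | var n => simp only [Term.subst]; split_ifs <;> first | assumption | constructor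
  | lam M => exact IsValue.lam _

theorem IsValue.iter {V : Term} (h : IsValue V) (j : ℕ) : IsValue ((liftAux 0)^[j] V) := by
  induction j with
  | zero => exact h
  | succ j ih => rw [Function.iterate_succ_apply']; exact ih.lift 0

theorem SurfBetaStep.lift {M N : Term} (h : SurfBetaStep M N) (c : ℕ) :
    SurfBetaStep (liftAux c M) (liftAux c N) := by
  induction h with
  | beta hV =>
    rw [lift_subst_ge _ 0 c _ (by omega)]
    exact SurfBetaStep.beta (hV.lift c)
  | appL _ ih => exact SurfBetaStep.appL ih
  | appR _ ih => exact SurfBetaStep.appR ih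

theorem SurfBetaStep.subst {M N V : Term} (h : SurfBetaStep M N) (hV : IsValue V) (j : ℕ) :
    SurfBetaStep (subst M j V) (subst N j V) := by
  induction h with
  | beta hW =>
    rw [subst_subst _ 0 j _ _ (by omega)]
    exact SurfBetaStep.beta (hW.subst hV j)
  | appL _ ih => exact SurfBetaStep.appL ih
  | appR _ ih => exact SurfBetaStep.appR ih

theorem SurfBetaStep.toBeta {M N : Term} (h : SurfBetaStep M N) : BetaStep M N := by
  induction h with
  | beta hW => exact BetaStep.beta hW
  | appL _ ih => exact BetaStep.appL ih
  | appR _ ih => exact BetaStep.appR ih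

/-- Standard reductions with cost.  `Std false` is an internal standard reduction,
`Std true` one that may begin with surface beta steps. -/
inductive Std : Bool → ℕ → Term → Term → Prop
  | var (x : ℕ) : Std false 0 (var x) (var x)
  | lam {n P A} : Std true n P A → Std false n (lam P) (lam A)
  | app {a b M M' N N'} : Std false a M M' → Std false b N N' →
      Std false (a + b) (app M N) (app M' N')
  | ch {a b M M' N N'} : Std true a M M' → Std true b N N' →
      Std false (a + b) (choice M N) (choice M' N')
  | inn {n M N} : Std false n M N → Std true n M N
  | step {n M M' N} : SurfBetaStep M M' → Std true n M' N → Std true (n + 1) M N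

theorem Std.refl (M : Term) : Std false 0 M M := by
  induction M with
  | var k => exact Std.var k
  | lam M ih => exact Std.lam (Std.inn ih)
  | app M N ih1 ih2 => exact Std.app ih1 ih2
  | choice M N ih1 ih2 => exact Std.ch (Std.inn ih1) (Std.inn ih2)

theorem Std.toTrue {b n M N} (h : Std b n M N) : Std true n M N := by
  cases b
  · exact Std.inn h
  · exact h

/-- `k` surface beta steps. -/
inductive SurfN : ℕ → Term → Term → Prop
  | refl (M : Term) : SurfN 0 M M
  | step {k M M' N} : SurfBetaStep M M' → SurfN k M' N → SurfN (k + 1) M N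

theorem SurfN.star {k M N} (h : SurfN k M N) : Relation.ReflTransGen SurfBetaStep M N := by
  induction h with
  | refl M => exact .refl
  | step h _ ih => exact .head h ih

theorem SurfN.std {k M N} (h : SurfN k M N) : ∀ {n A}, Std true n N A → Std true (k + n) M A := by
  induction h with
  | refl M => intro n A h; simpa using h
  | @step k M M' N h _ ih =>
    intro n A h'
    have := Std.step h (ih h')
    rwa [show k + 1 + n = k + n + 1 by omega]

theorem Std.split {b n M N} (h : Std b n M N) :
    ∃ k c R, SurfN k M R ∧ Std false c R N ∧ k + c = n := by
  cases b with
  | false => exact ⟨0, n, M, .refl _, h, by omega⟩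
  | true =>
    generalize hb : true = b at h
    induction h with
    | inn h _ => exact ⟨0, _, _, .refl _, h, by omega⟩
    | step hs _ ih =>
      obtain ⟨k, c, R, h1, h2, h3⟩ := ih rfl
      exact ⟨k + 1, c, R, .step hs h1, h2, by omega⟩
    | _ => cases hb

theorem SurfN.appL {k M N} (h : SurfN k M N) (P : Term) : SurfN k (app M P) (app N P) := by
  induction h with
  | refl M => exact .refl _
  | step h _ ih => exact .step (.appL h) ih

theorem SurfN.appR {k M N} (h : SurfN k M N) (P : Term) : SurfN k (app P M) (app P N) := by
  induction h with
  | refl M => exact .refl _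
  | step h _ ih => exact .step (.appR h) ih

theorem Std.app' {b b' n m M M' N N'} (h : Std b n M M') (h' : Std b' m N N') :
    ∃ k, Std true k (Term.app M N) (Term.app M' N') := by
  obtain ⟨k, c, R, h1, h2, h3⟩ := h.split
  obtain ⟨k', c', R', h1', h2', h3'⟩ := h'.split
  exact ⟨_, (h1.appL N).std ((h1'.appR R).std (Std.inn (Std.app h2 h2')))⟩

theorem Std.lift {b n M N} (h : Std b n M N) : ∀ c, Std b n (liftAux c M) (liftAux c N) := by
  induction h with
  | var x => intro c; exact Std.refl _
  | lam _ ih => intro c; exact Std.lam (ih (c + 1))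
  | app _ _ ih1 ih2 => intro c; exact Std.app (ih1 c) (ih2 c)
  | ch _ _ ih1 ih2 => intro c; exact Std.ch (ih1 c) (ih2 c)
  | inn _ ih => intro c; exact Std.inn (ih c)
  | step h _ ih => intro c; exact Std.step (h.lift c) (ih c)

theorem Std.subst {b n M N} (h : Std b n M N) : ∀ {m j V V'}, IsValue V → Std true m V V' →
    ∃ k, Std true k (subst M j V) (subst N j V') := by
  induction h with
  | var x =>
    intro m j V V' hV h
    simp only [Term.subst]
    split_ifs
    · exact ⟨m, h⟩
    · exact ⟨0, (Std.refl _).toTrue⟩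
    · exact ⟨0, (Std.refl _).toTrue⟩
  | lam _ ih =>
    intro m j V V' hV h
    obtain ⟨k, hk⟩ := ih (j := j + 1) (hV.lift 0) (h.lift 0)
    exact ⟨k, .inn (.lam hk)⟩
  | app _ _ ih1 ih2 =>
    intro m j V V' hV h
    obtain ⟨k, hk⟩ := ih1 (j := j) hV h
    obtain ⟨k', hk'⟩ := ih2 (j := j) hV h
    exact hk.app' hk'
  | ch _ _ ih1 ih2 =>
    intro m j V V' hV h
    obtain ⟨k, hk⟩ := ih1 (j := j) hV h
    obtain ⟨k', hk'⟩ := ih2 (j := j) hV h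
    exact ⟨_, .inn (.ch hk hk')⟩
  | inn _ ih => exact ih
  | step hs _ ih =>
    intro m j V V' hV h
    obtain ⟨k, hk⟩ := ih (j := j) hV h
    exact ⟨_, .step (hs.subst hV j) hk⟩

theorem Std.value {n M V} (h : Std false n M V) (hV : IsValue V) : IsValue M := by
  cases hV with
  | var x => cases h; constructor
  | lam P => cases h; constructor

theorem Std.surf {N N'} (hs : SurfBetaStep N N') : ∀ {n R}, Std false n R N →
    ∃ k, Std true k R N' := by
  induction hs with
  | beta hV =>
    intro n R h
    cases h with
    | app h1 h2 =>
      cases h1 with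
      | lam h1 =>
        have hv := h2.value hV
        obtain ⟨k, hk⟩ := h1.subst (j := 0) hv h2.toTrue
        exact ⟨_, .step (.beta hv) hk⟩
  | appL _ ih =>
    intro n R h
    cases h with
    | app h1 h2 =>
      obtain ⟨k, hk⟩ := ih h1
      exact hk.app' h2
  | appR _ ih =>
    intro n R h
    cases h with
    | app h1 h2 =>
      obtain ⟨k, hk⟩ := ih h2
      exact h1.app' hk

theorem Std.beta {b n R N} (h : Std b n R N) : ∀ {N'}, BetaStep N N' →
    ∃ k, Std true k R N' := by
  induction h with
  | var x => intro N' h; cases h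
  | lam _ ih =>
    intro N' h
    cases h with
    | lam h => obtain ⟨k, hk⟩ := ih h; exact ⟨k, .inn (.lam hk)⟩
  | app h1 h2 ih1 ih2 =>
    intro N' h
    cases h with
    | beta hV => exact Std.surf (.beta hV) (Std.app h1 h2)
    | appL h => obtain ⟨k, hk⟩ := ih1 h; exact hk.app' h2
    | appR h => obtain ⟨k, hk⟩ := ih2 h; exact h1.app' hk
  | ch h1 h2 ih1 ih2 =>
    intro N' h
    cases h with
    | chL h => obtain ⟨k, hk⟩ := ih1 h; exact ⟨_, .inn (.ch hk h2)⟩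
    | chR h => obtain ⟨k, hk⟩ := ih2 h; exact ⟨_, .inn (.ch h1 hk)⟩
  | inn _ ih => exact ih
  | step hs _ ih => intro N' h; obtain ⟨k, hk⟩ := ih h; exact ⟨_, .step hs hk⟩

theorem Std.plus {N A B} (hp : PlusStep N A B) : ∀ {n R}, Std false n R N →
    ∃ A0 B0 k l, PlusStep R A0 B0 ∧ Std true k A0 A ∧ Std true l B0 B := by
  induction hp with
  | choice =>
    intro n R h
    cases h with
    | ch h1 h2 => exact ⟨_, _, _, _, .choice, h1, h2⟩
  | appL _ ih =>
    intro n R h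
    cases h with
    | app h1 h2 =>
      obtain ⟨A0, B0, k, l, h3, h4, h5⟩ := ih h1
      obtain ⟨k', h4⟩ := h4.app' h2
      obtain ⟨l', h5⟩ := h5.app' h2
      exact ⟨_, _, _, _, .appL h3, h4, h5⟩
  | appR _ ih =>
    intro n R h
    cases h with
    | app h1 h2 =>
      obtain ⟨A0, B0, k, l, h3, h4, h5⟩ := ih h2
      obtain ⟨k', h4⟩ := h1.app' h4
      obtain ⟨l', h5⟩ := h1.app' h5
      exact ⟨_, _, _, _, .appR h3, h4, h5⟩

/-- Internal beta steps. -/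
inductive IB : Term → Term → Prop
  | lam {M M'} : BetaStep M M' → IB (lam M) (lam M')
  | chL {M M' N} : BetaStep M M' → IB (choice M N) (choice M' N)
  | chR {M N N'} : BetaStep N N' → IB (choice M N) (choice M N')
  | appL {M M' N} : IB M M' → IB (app M N) (app M' N)
  | appR {M N N'} : IB N N' → IB (app M N) (app M N')

theorem IB.toBeta {M N} (h : IB M N) : BetaStep M N := by
  induction h with
  | lam h => exact .lam h
  | chL h => exact .chL h
  | chR h => exact .chR h
  | appL _ ih => exact .appL ih
  | appR _ ih => exact .appR ih

theorem Std.star {b n M N} (h : Std b n M N) :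
    Relation.ReflTransGen BetaStep M N ∧ (b = false → Relation.ReflTransGen IB M N) := by
  induction h with
  | var x => exact ⟨.refl, fun _ => .refl⟩
  | @lam n P A _ ih =>
    have : Relation.ReflTransGen IB (Term.lam P) (Term.lam A) :=
      ih.1.lift Term.lam fun _ _ h => .lam h
    exact ⟨this.lift id fun _ _ h => h.toBeta, fun _ => this⟩
  | @app a b M M' N N' _ _ ih1 ih2 =>
    have : Relation.ReflTransGen IB (Term.app M N) (Term.app M' N') :=
      ((ih1.2 rfl).lift (fun X => Term.app X N) fun _ _ h => .appL h).trans
        ((ih2.2 rfl).lift (fun X => Term.app M' X) fun _ _ h => .appR h)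
    exact ⟨this.lift id fun _ _ h => h.toBeta, fun _ => this⟩
  | @ch a b M M' N N' _ _ ih1 ih2 =>
    have : Relation.ReflTransGen IB (Term.choice M N) (Term.choice M' N') :=
      (ih1.1.lift (fun X => Term.choice X N) fun _ _ h => .chL h).trans
        (ih2.1.lift (fun X => Term.choice M' X) fun _ _ h => .chR h)
    exact ⟨this.lift id fun _ _ h => h.toBeta, fun _ => this⟩
  | inn _ ih => exact ⟨ih.1, fun h => by cases h⟩
  | step hs _ ih => exact ⟨.head hs.toBeta ih.1, fun h => by cases h⟩

/-- Size of a term. -/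
def tsize : Term → ℕ
  | var _ => 1
  | lam M => tsize M + 1
  | app M N => tsize M + tsize N + 1
  | choice M N => tsize M + tsize N + 1

theorem subst_eq_lam {M V Q : Term} {j : ℕ} (h : subst M j V = lam Q) :
    (M = var j ∧ V = lam Q) ∨ ∃ M', M = lam M' ∧ subst M' (j + 1) (liftAux 0 V) = Q := by
  cases M with
  | var k =>
    simp only [subst] at h
    split_ifs at h with h1
    exact Or.inl ⟨by rw [h1], h⟩
  | lam M => simp only [subst, lam.injEq] at h; exact Or.inr ⟨M, rfl, h⟩
  | app M N => simp [subst] at h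
  | choice M N => simp [subst] at h

theorem subst_eq_app {M V Q R : Term} {j : ℕ} (hV : IsValue V) (h : subst M j V = app Q R) :
    ∃ M1 M2, M = app M1 M2 ∧ subst M1 j V = Q ∧ subst M2 j V = R := by
  cases M with
  | var k =>
    simp only [subst] at h
    split_ifs at h
    subst h; cases hV
  | lam M => simp [subst] at h
  | app M N => simp only [subst, app.injEq] at h; exact ⟨M, N, rfl, h⟩
  | choice M N => simp [subst] at h

theorem subst_eq_var {M V : Term} {j i : ℕ} (h : subst M j V = var i) : ∃ k, M = var k := by
  cases M with
  | var k => exact ⟨k, rfl⟩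
  | lam M => simp [subst] at h
  | app M N => simp [subst] at h
  | choice M N => simp [subst] at h

theorem no_loop (s : ℕ) : ∀ (X X' V : Term) (i j : ℕ), tsize X ≤ s → IsValue V → BetaStep X X' →
    subst X j V = lam (app (var i) X') → False := by
  induction s with
  | zero => intro X X' V i j hs; cases X <;> simp [tsize] at hs
  | succ s ih =>
    intro X X' V i j hs hV hb h
    rcases subst_eq_lam h with ⟨rfl, _⟩ | ⟨X5, rfl, h5⟩
    · cases hb
    · obtain ⟨Z, X6, rfl, h6, h7⟩ := subst_eq_app (hV.lift 0) h5
      obtain ⟨k, rfl⟩ := subst_eq_var h6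
      cases hb with
      | lam hb =>
        cases hb with
        | appL hb => cases hb
        | appR hb =>
          refine ih X6 _ _ _ _ ?_ (hV.lift 0) hb h7
          simp only [tsize] at hs; omega

theorem iter_lift_lam (j c : ℕ) : ∀ W : Term,
    (liftAux c)^[j] (lam W) = lam ((liftAux (c + 1))^[j] W) := by
  induction j with
  | zero => intro W; rfl
  | succ j ih => intro W; simp only [Function.iterate_succ_apply, liftAux]; rw [ih]

theorem iter_lift_app (j c : ℕ) : ∀ W Z : Term,
    (liftAux c)^[j] (app W Z) = app ((liftAux c)^[j] W) ((liftAux c)^[j] Z) := by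
  induction j with
  | zero => intro W Z; rfl
  | succ j ih => intro W Z; simp only [Function.iterate_succ_apply, liftAux]; rw [ih]

theorem iter_lift_ch (j c : ℕ) : ∀ W Z : Term,
    (liftAux c)^[j] (choice W Z) = choice ((liftAux c)^[j] W) ((liftAux c)^[j] Z) := by
  induction j with
  | zero => intro W Z; rfl
  | succ j ih => intro W Z; simp only [Function.iterate_succ_apply, liftAux]; rw [ih]

theorem iter_lift_var (j c k : ℕ) :
    (liftAux c)^[j] (var k) = if k < c then var k else var (k + j) := by
  induction j with
  | zero => simp
  | succ j ih =>
    rw [Function.iterate_succ_apply', ih]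
    split_ifs <;> simp only [liftAux] <;> split_ifs <;> first | rfl | omega

theorem scope {j : ℕ} (hj : 1 ≤ j) {V Q : Term}
    (h : (liftAux 0)^[j] V = lam (app (var j) Q)) : False := by
  cases V with
  | var k => rw [iter_lift_var] at h; simp at h
  | app M N => rw [iter_lift_app] at h; cases h
  | choice M N => rw [iter_lift_ch] at h; cases h
  | lam W =>
    rw [iter_lift_lam] at h
    cases W with
    | var k => rw [iter_lift_var] at h; split_ifs at h <;> simp at h
    | lam W => rw [iter_lift_lam] at h; simp at h
    | choice M N => rw [iter_lift_ch] at h; simp at h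
    | app M N =>
      rw [iter_lift_app] at h
      simp only [lam.injEq, app.injEq] at h
      have h := h.1
      cases M with
      | var k => rw [iter_lift_var] at h; split_ifs at h <;> simp at h <;> omega
      | lam W => rw [iter_lift_lam] at h; simp at h
      | choice M N => rw [iter_lift_ch] at h; simp at h
      | app M N => rw [iter_lift_app] at h; simp at h

theorem no_self (s : ℕ) : ∀ (Q V P : Term) (j : ℕ), tsize Q ≤ s → IsValue V → 1 ≤ j →
    subst Q j ((liftAux 0)^[j] V) = app (lam Q) P → False := by
  induction s with
  | zero => intro Q V P j hs; cases Q <;> simp [tsize] at hs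
  | succ s ih =>
    intro Q V P j hs hV hj h
    obtain ⟨Q1, Q2, rfl, h1, h2⟩ := subst_eq_app (hV.iter j) h
    rcases subst_eq_lam h1 with ⟨rfl, h3⟩ | ⟨Q3, rfl, h3⟩
    · exact scope hj h3
    · rw [← Function.iterate_succ_apply' (liftAux 0)] at h3
      refine ih Q3 V Q2 (j + 1) ?_ hV (by omega) h3
      simp only [tsize] at hs; omega

/-- The argument of a redex cannot take part in a coincidence. -/
theorem no_arg {P V V' : Term} (hV : IsValue V) (hb : BetaStep V V')
    (h : subst P 0 V = app (lam P) V') : False := by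
  obtain ⟨P1, P2, rfl, h1, h2⟩ := subst_eq_app hV h
  rcases subst_eq_lam h1 with ⟨rfl, h3⟩ | ⟨Q, rfl, h3⟩
  · subst h3
    cases hb with
    | lam hb =>
      cases hb with
      | appL hb => cases hb
      | appR hb => exact no_loop _ _ _ _ _ _ le_rfl hV hb h2
  · exact no_self _ Q V P2 1 le_rfl hV le_rfl h3

/-- Steps that do not coincide. -/
def NC (j : ℕ) (V b X Y : Term) : Prop :=
  BetaStep X Y ∧ subst X j ((liftAux 0)^[j] V) ≠ app (lam Y) b

/-- Either no coincidence along the reduction, or a cheaper one. -/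
def FF (n : ℕ) (P A : Term) : Prop :=
  ∀ (j : ℕ) (V b : Term), IsValue V → (j = 0 → b = V) →
    Relation.ReflTransGen (NC j V b) P A ∨
    ∃ c k Q, SurfN k (subst P j ((liftAux 0)^[j] V)) (app (lam Q) b) ∧ Std true c Q A ∧ k + c < n

theorem star_nonlam {r : Term → Term → Prop} {N M M' : Term}
    (hr : ∀ X Y, IB X Y → (∀ Q, X ≠ lam Q) → r (app X N) (app Y N))
    (h : Relation.ReflTransGen IB M M') (hM : ∀ Q, M ≠ lam Q) :
    Relation.ReflTransGen r (app M N) (app M' N) := by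
  induction h using Relation.ReflTransGen.head_induction_on with
  | refl => exact .refl
  | head h _ ih =>
    refine .head (hr _ _ h hM) (ih ?_)
    intro Q hQ
    subst hQ
    cases h
    exact hM _ rfl

theorem Std.main {bo n P A} (h : Std bo n P A) :
    FF n P A ∧ ∀ Q0 QA, bo = false → P = Term.lam Q0 → A = Term.lam QA → FF n Q0 QA := by
  induction h with
  | var x => exact ⟨fun j V b _ _ => Or.inl .refl, fun Q0 QA _ h => by cases h⟩
  | @lam n P A hP ih =>
    refine ⟨fun j V b _ _ => Or.inl ?_, ?_⟩
    · exact hP.star.1.lift Term.lam fun _ _ h => ⟨.lam h, by simp [Term.subst]⟩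
    · intro Q0 QA _ h1 h2
      cases h1; cases h2
      exact ih.1
  | @ch a b M M' N N' hM hN ih1 ih2 =>
    refine ⟨fun j V b _ _ => Or.inl ?_, fun Q0 QA _ h => by cases h⟩
    exact (hM.star.1.lift (fun X => Term.choice X N) fun _ _ h =>
        ⟨.chL h, by simp [Term.subst]⟩).trans
      (hN.star.1.lift (fun X => Term.choice M' X) fun _ _ h => ⟨.chR h, by simp [Term.subst]⟩)
  | inn _ ih => exact ⟨ih.1, fun Q0 QA h => by cases h⟩
  | @step n P P' A hs hP ih =>
    refine ⟨fun j V b hV hj => ?_, fun Q0 QA h => by cases h⟩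
    by_cases hc : Term.subst P j ((liftAux 0)^[j] V) = Term.app (Term.lam P') b
    · exact Or.inr ⟨n, 0, P', by rw [hc]; exact .refl _, hP, by omega⟩
    · rcases ih.1 j V b hV hj with h | ⟨c, k, Q, h1, h2, h3⟩
      · exact Or.inl (.head ⟨hs.toBeta, hc⟩ h)
      · exact Or.inr ⟨c, k + 1, Q, .step (hs.subst (hV.iter j) j) h1, h2, by omega⟩
  | @app a b M M' N N' hM hN ih1 ih2 =>
    refine ⟨fun j V v hV hj => ?_, fun Q0 QA _ h => by cases h⟩
    have right : Relation.ReflTransGen (NC j V v) (Term.app M' N) (Term.app M' N') := by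
      refine (hN.star.2 rfl).lift (fun X => Term.app M' X) fun Y Y' h => ⟨.appR h.toBeta, ?_⟩
      intro hc
      simp only [Term.subst, app.injEq] at hc
      rcases subst_eq_lam hc.1 with ⟨rfl, h3⟩ | ⟨Q, rfl, h3⟩
      · rcases Nat.eq_zero_or_pos j with rfl | hj'
        · have := hj rfl
          subst this
          simp only [Function.iterate_zero, id] at h3 hc
          exact no_loop _ Y Y' _ 0 0 le_rfl hV h.toBeta (hc.2.trans h3)
        · exact scope hj' h3
      · rw [← Function.iterate_succ_apply' (liftAux 0)] at h3
        exact no_self _ Q V Y' (j + 1) le_rfl hV (by omega) h3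
    by_cases hlam : ∃ Q0, M = Term.lam Q0
    · obtain ⟨Q0, rfl⟩ := hlam
      cases hM with
      | @lam _ _ QA hQ =>
        by_cases hv : Term.subst N j ((liftAux 0)^[j] V) = v
        · rcases ih1.2 Q0 QA rfl rfl rfl (j + 1) V N hV (by omega) with h | ⟨c, k, S, h1, h2, h3⟩
          · refine Or.inl (.trans ?_ right)
            refine h.lift (fun X => Term.app (Term.lam X) N) fun X Y h => ⟨.appL (.lam h.1), ?_⟩
            intro hc
            simp only [Term.subst, app.injEq, lam.injEq] at hc
            rw [← Function.iterate_succ_apply' (liftAux 0)] at hc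
            exact h.2 hc.1
          · refine Or.inr ⟨k + (c + b), 0,
              Term.subst Q0 (j + 1) ((liftAux 0)^[j + 1] V), ?_, ?_, by omega⟩
            · simp only [Term.subst]
              rw [← Function.iterate_succ_apply' (liftAux 0), hv]
              exact .refl _
            · exact h1.std (.inn (.app (.lam h2) hN))
        · refine Or.inl (.trans ?_ right)
          refine hQ.star.1.lift (fun X => Term.app (Term.lam X) N) fun X Y h =>
            ⟨.appL (.lam h), ?_⟩
          intro hc
          simp only [Term.subst, app.injEq] at hc
          exact hv hc.2
    · refine Or.inl (.trans ?_ right)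
      refine star_nonlam ?_ (hM.star.2 rfl) (fun Q h => hlam ⟨Q, h⟩)
      intro X Y h hX
      refine ⟨.appL h.toBeta, ?_⟩
      intro hc
      simp only [Term.subst, app.injEq] at hc
      rcases subst_eq_lam hc.1 with ⟨rfl, _⟩ | ⟨Q, rfl, _⟩
      · cases h
      · exact hX _ rfl

/-- Genuinely deep beta steps. -/
def PD (X Y : Term) : Prop := IB X Y ∧ ¬ SurfBetaStep X Y

/-- Genuinely deep steps, or nothing. -/
theorem PD_or {X Y : Term} (h : IB X Y) (h' : SurfBetaStep X Y → X = Y) :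
    Relation.ReflTransGen PD X Y := by
  by_cases hs : SurfBetaStep X Y
  · rw [h' hs]
  · exact .single ⟨h, hs⟩

theorem surf_app_inv {X Y Z : Term} (h : SurfBetaStep (app X Y) Z) :
    (∃ P, X = lam P ∧ IsValue Y ∧ Z = subst P 0 Y) ∨
    (∃ X', SurfBetaStep X X' ∧ Z = app X' Y) ∨ (∃ Y', SurfBetaStep Y Y' ∧ Z = app X Y') := by
  cases h with
  | beta hV => exact Or.inl ⟨_, rfl, hV, rfl⟩
  | appL h => exact Or.inr (Or.inl ⟨_, h, rfl⟩)
  | appR h => exact Or.inr (Or.inr ⟨_, h, rfl⟩)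

theorem PD_left {N M M' : Term} (h : Relation.ReflTransGen PD M M')
    (hc : ¬((∃ Q, M = lam Q) ∧ IsValue N)) :
    Relation.ReflTransGen PD (app M N) (app M' N) := by
  induction h using Relation.ReflTransGen.head_induction_on with
  | refl => exact .refl
  | head h _ ih =>
    refine .trans (PD_or (.appL h.1) ?_) (ih ?_)
    · intro hs
      rcases surf_app_inv hs with ⟨P, h1, h2, _⟩ | ⟨X', h1, h2⟩ | ⟨Y', h1, h2⟩
      · exact (hc ⟨⟨P, h1⟩, h2⟩).elim
      · cases h2; exact (h.2 h1).elim
      · cases h2; rfl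
    · rintro ⟨⟨Q, rfl⟩, hN⟩
      have h := h.1
      cases h
      exact hc ⟨⟨_, rfl⟩, hN⟩

theorem Std.alt {bo n R N} (h : Std bo n R N) : bo = false →
    Relation.ReflTransGen PD R N ∨
    ∃ R' c, Relation.ReflTransGen SurfBetaStep R R' ∧ Std false c R' N ∧ c < n := by
  induction h with
  | var x => exact fun _ => Or.inl .refl
  | lam h _ => exact fun _ => Or.inl (h.star.1.lift Term.lam fun _ _ h => ⟨.lam h, nofun⟩)
  | @ch a b M M' N N' hM hN _ _ =>
    intro _
    exact Or.inl ((hM.star.1.lift (fun X => Term.choice X N) fun _ _ h => ⟨.chL h, nofun⟩).trans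
      (hN.star.1.lift (fun X => Term.choice M' X) fun _ _ h => ⟨.chR h, nofun⟩))
  | inn => exact nofun
  | step => exact nofun
  | @app a b M M' N N' hM hN ih1 ih2 =>
    intro _
    rcases ih1 rfl with hl | ⟨R', c, h1, h2, h3⟩
    swap
    · exact Or.inr ⟨_, _, h1.lift (fun X => Term.app X N) fun _ _ h => .appL h,
        .app h2 hN, by omega⟩
    rcases ih2 rfl with hr | ⟨R', c, h1, h2, h3⟩
    swap
    · exact Or.inr ⟨_, _, h1.lift (fun X => Term.app M X) fun _ _ h => .appR h,
        .app hM h2, by omega⟩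
    have right : Relation.ReflTransGen PD (Term.app M' N) (Term.app M' N') := by
      have := hr.lift' (p := PD) (fun X => Term.app M' X) ?_
      · exact this
      intro Y Y' h
      refine PD_or (.appR h.1) ?_
      intro hs
      rcases surf_app_inv hs with ⟨P, rfl, hV, h2⟩ | ⟨X', h1, h2⟩ | ⟨Z, h1, h2⟩
      · exact (no_arg hV h.1.toBeta h2.symm).elim
      · cases h2; rfl
      · cases h2; exact (h.2 h1).elim
    by_cases hc : (∃ Q0, M = Term.lam Q0) ∧ IsValue N
    · obtain ⟨⟨Q0, rfl⟩, hV⟩ := hc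
      cases hM with
      | @lam _ _ QA hQ =>
        rcases hQ.main.1 0 N N hV (fun _ => rfl) with h | ⟨c, k, S, h1, h2, h3⟩
        · refine Or.inl (.trans ?_ right)
          have := h.lift (p := PD) (fun X => Term.app (Term.lam X) N) ?_
          · exact this
          intro X Y h
          refine ⟨.appL (.lam h.1), ?_⟩
          intro hs
          rcases surf_app_inv hs with ⟨P, h1, _, h2⟩ | ⟨X', h1, h2⟩ | ⟨Z, h1, h2⟩
          · cases h1; exact h.2 h2.symm
          · cases h1
          · cases hV <;> cases h1
        · exact Or.inr ⟨_, _, .head (.beta hV) h1.star, .app (.lam h2) hN, by omega⟩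
    · exact Or.inl (.trans (PD_left hl hc) right)

theorem Std.deep (n : ℕ) : ∀ {R N}, Std false n R N →
    ∃ R', Relation.ReflTransGen SurfBetaStep R R' ∧ Relation.ReflTransGen PD R' N := by
  induction n using Nat.strong_induction_on with
  | _ n ih =>
    intro R N h
    rcases h.alt rfl with h1 | ⟨R', c, h1, h2, h3⟩
    · exact ⟨R, .refl, h1⟩
    · obtain ⟨R'', h4, h5⟩ := ih c h3 h2
      exact ⟨R'', h1.trans h4, h5⟩

end Term

/-- Finitely many lifted steps. -/
def LS (r : Term → MDist Term → Prop) (a b : MDist Term) : Prop :=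
  Relation.ReflTransGen (Lift r) a b

theorem LS.trans {r : Term → MDist Term → Prop} {a b c : MDist Term}
    (h : LS r a b) (h' : LS r b c) : LS r a c := Relation.ReflTransGen.trans h h'

theorem scale_single (p : ℝ≥0) (M : Term) : MDist.scale p (MDist.single M) = {(p, M)} := by
  simp [MDist.scale, MDist.single]

theorem Lift.refl' {r : Term → MDist Term → Prop} (a : MDist Term) : Lift r a a := by
  induction a using Multiset.induction_on with
  | empty => exact .nil
  | cons q a ih =>
    have := Lift.cons (p := q.1) (M := q.2) (r := r) (Or.inl rfl) ih
    rwa [scale_single, Multiset.singleton_add] at this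

theorem Lift.add' {r : Term → MDist Term → Prop} {a b c d : MDist Term}
    (h : Lift r a b) (h' : Lift r c d) : Lift r (a + c) (b + d) := by
  induction h with
  | nil => simpa using h'
  | cons h _ ih =>
    rw [Multiset.cons_add, add_assoc]
    exact .cons h ih

theorem Lift.one {r : Term → MDist Term → Prop} {p : ℝ≥0} {M : Term} {m : MDist Term}
    (h : r M m) : Lift r {(p, M)} (MDist.scale p m) := by
  have := Lift.cons (p := p) (r := r) (Or.inr h) .nil
  simpa using this

theorem LS.add {r : Term → MDist Term → Prop} {a b c d : MDist Term}
    (h : LS r a b) (h' : LS r c d) : LS r (a + c) (b + d) := by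
  have h1 : LS r (a + c) (b + c) :=
    Relation.ReflTransGen.lift (fun x => x + c) (fun _ _ h => h.add' (Lift.refl' c)) _ _ h
  have h2 : LS r (b + c) (b + d) :=
    Relation.ReflTransGen.lift (fun x => b + x) (fun _ _ h => (Lift.refl' b).add' h) _ _ h'
  exact h1.trans h2

theorem LS.path {r : Term → MDist Term → Prop} {t : Term → Term → Prop}
    (ht : ∀ X Y, t X Y → r X (MDist.single Y)) {M N : Term} (p : ℝ≥0)
    (h : Relation.ReflTransGen t M N) : LS r {(p, M)} {(p, N)} := by
  refine Relation.ReflTransGen.lift (fun X => ({(p, X)} : MDist Term)) (fun X Y h => ?_) _ _ h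
  have := Lift.one (p := p) (ht X Y h)
  rwa [scale_single] at this

/-- Componentwise internal standard reduction. -/
def RelInn (a b : MDist Term) : Prop :=
  Multiset.Rel (fun x y : ℝ≥0 × Term => x.1 = y.1 ∧ ∃ n, Std false n x.2 y.2) a b

theorem RelInn.refl (a : MDist Term) : RelInn a a :=
  Multiset.rel_refl_of_refl_on fun x _ => ⟨rfl, 0, Std.refl _⟩

theorem RelInn.one {p : ℝ≥0} {M N : Term} {n : ℕ} (h : Std false n M N) :
    RelInn {(p, M)} {(p, N)} :=
  Multiset.Rel.cons ⟨rfl, n, h⟩ Multiset.Rel.zero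

theorem surf_path {p : ℝ≥0} {M N : Term} {n : ℕ} (h : Std true n M N) :
    ∃ s, LS surfRed {(p, M)} s ∧ RelInn s {(p, N)} := by
  obtain ⟨k, c, R, h1, h2, _⟩ := h.split
  exact ⟨{(p, R)}, LS.path (fun X Y h => Or.inl ⟨Y, h, rfl⟩) p h1.star, RelInn.one h2⟩

theorem absorb_one {p : ℝ≥0} {R N : Term} {n : ℕ} {m : MDist Term} (h : Std false n R N)
    (hm : LiftTerm red N m) : ∃ s, LS surfRed {(p, R)} s ∧ RelInn s (MDist.scale p m) := by
  rcases hm with rfl | ⟨N', hb, rfl⟩ | ⟨A, B, hp, rfl⟩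
  · rw [scale_single]
    exact ⟨_, .refl, RelInn.one h⟩
  · rw [scale_single]
    obtain ⟨k, hk⟩ := h.beta hb
    exact surf_path hk
  · obtain ⟨A0, B0, k, l, h1, h2, h3⟩ := Std.plus hp h
    obtain ⟨s1, h4, h5⟩ := surf_path (p := p * (1 / 2)) h2
    obtain ⟨s2, h6, h7⟩ := surf_path (p := p * (1 / 2)) h3
    have h0 : Lift surfRed {(p, R)} (MDist.scale p {((1 : ℝ≥0) / 2, A0), ((1 : ℝ≥0) / 2, B0)}) :=
      Lift.one (Or.inr ⟨A0, B0, h1, rfl⟩)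
    have e : ∀ X Y : Term, MDist.scale p {((1 : ℝ≥0) / 2, X), ((1 : ℝ≥0) / 2, Y)} =
        ({(p * (1 / 2), X)} + {(p * (1 / 2), Y)} : MDist Term) := by
      intro X Y
      simp only [MDist.scale, Multiset.insert_eq_cons, Multiset.map_cons, Multiset.map_singleton,
        Multiset.singleton_add]
    rw [e] at h0 ⊢
    exact ⟨s1 + s2, LS.trans (.single h0) (h4.add h6), Multiset.Rel.add h5 h7⟩

theorem absorb {n n' : MDist Term} (h : Lift red n n') : ∀ {s}, RelInn s n →
    ∃ s', LS surfRed s s' ∧ RelInn s' n' := by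
  induction h with
  | nil =>
    intro s h
    exact ⟨s, .refl, h⟩
  | cons hm _ ih =>
    intro s h
    obtain ⟨⟨q, R⟩, s0, ⟨h1, k, h2⟩, h3, rfl⟩ := Multiset.rel_cons_right.1 h
    simp only at h1 h2
    subst h1
    obtain ⟨s1, h4, h5⟩ := ih h3
    obtain ⟨s2, h6, h7⟩ := absorb_one (p := q) h2 hm
    refine ⟨s2 + s1, ?_, Multiset.Rel.add h7 h5⟩
    rw [← Multiset.singleton_add]
    exact h6.add h4

theorem PD.deepRed {X Y : Term} (h : PD X Y) : deepRed X (MDist.single Y) := by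
  refine ⟨Or.inl ⟨Y, h.1.toBeta, rfl⟩, ?_⟩
  rintro (⟨N, h1, h2⟩ | ⟨A, B, _, h2⟩)
  · simp only [MDist.single, Multiset.singleton_inj, Prod.mk.injEq, true_and] at h2
    subst h2
    exact h.2 h1
  · have := congrArg Multiset.card h2
    simp [MDist.single] at this

theorem finish {s n : MDist Term} (h : RelInn s n) :
    ∃ r, LS surfRed s r ∧ LS deepRed r n := by
  unfold RelInn at h
  induction h with
  | zero => exact ⟨0, .refl, .refl⟩
  | @cons x y as bs hab _ ih =>
    obtain ⟨r, h1, h2⟩ := ih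
    obtain ⟨p, M⟩ := x
    obtain ⟨q, N⟩ := y
    obtain ⟨e, k, h3⟩ := hab
    simp only at e h3
    subst e
    obtain ⟨R, h4, h5⟩ := Std.deep k h3
    rw [← Multiset.singleton_add, ← Multiset.singleton_add]
    exact ⟨{(p, R)} + r, (LS.path (fun X Y h => Or.inl ⟨Y, h, rfl⟩) p h4).add h1,
      (LS.path (fun X Y h => PD.deepRed h) p h5).add h2⟩

/-- Finitary Surface Standardization for `Λ⊕^cbv`: every finite reduction
sequence factors as surface steps followed by deep steps. -/
theorem finitary_surface_standardization :
    ∀ m n : MDist Term, Relation.ReflTransGen (Lift red) m n →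
      ∃ r, Relation.ReflTransGen (Lift surfRed) m r ∧
        Relation.ReflTransGen (Lift deepRed) r n := by
  intro m n h
  have key : ∃ s, LS surfRed m s ∧ RelInn s n := by
    induction h with
    | refl => exact ⟨m, .refl, RelInn.refl m⟩
    | tail _ hs ih =>
      obtain ⟨s, h1, h2⟩ := ih
      obtain ⟨s', h3, h4⟩ := absorb hs h2
      exact ⟨s', h1.trans h3, h4⟩
  obtain ⟨s, h1, h2⟩ := key
  obtain ⟨r, h3, h4⟩ := finish h2
  exact ⟨r, h1.trans h3, h4⟩
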